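/- Solutions of the learning problem are local solutions of the KKT reformulation (Theorem 5.1): Assume (B1)–(B4) and that (P_{α,y_δ}) admits a solution for every α ∈ [α̲,ᾱ]. Let (α*,y*,u*) be a solution of the learning problem (LP), and assume: (i) (P_{α*,y_δ}) is stable with respect to the regularization parameters, i.e. for every sequence αⁿ → α* in [α̲,ᾱ], every sequence (yⁿ,uⁿ) of solutions to (P_{αⁿ,y_δ}) has a strong cluster point in Y × U and every strong cluster point solves (P_{α*,y_δ}); (ii) (y*,u*) satisfies the second order sufficient optimality conditions of (P_{α*,y_δ}); (iii) (y*,u*) is the unique solution of (P_{α*,y_δ}). Then there exists a unique λ* ∈ Z' such that (α*,y*,u*,λ*) is a local solution of the KKT reformulation (LP̄). -/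

import Mathlib

open Filter Topology
open scoped RealInnerProductSpace

/-- The Tikhonov functional `J_{α,yδ}` with real-valued penalty functionals. -/
noncomputable def Jr {Y U Ytil : Type*} [NormedAddCommGroup Y] [NormedSpace ℝ Y]
    [NormedAddCommGroup U] [NormedSpace ℝ U]
    [NormedAddCommGroup Ytil] [InnerProductSpace ℝ Ytil]
    {m r : ℕ} (ιY : Y →L[ℝ] Ytil) (Ψ : Fin r → U → ℝ)
    (α : Fin r → ℝ) (yδ : Fin m → Ytil) (p : Y × U) : ℝ :=
  (1 / (2 * (m : ℝ))) * ∑ j, ‖ιY p.1 - yδ j‖ ^ 2 + ∑ i, α i * Ψ i p.2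

/-- `(y,u,λ)` is a KKT point of the lower level problem `(P_{α,yδ})` (case `U_ad = U`):
the adjoint equation, the optimality equation and the state equation hold. -/
def IsKKTPoint {Y U Ytil Z : Type*} [NormedAddCommGroup Y] [NormedSpace ℝ Y]
    [NormedAddCommGroup U] [NormedSpace ℝ U]
    [NormedAddCommGroup Ytil] [InnerProductSpace ℝ Ytil]
    [NormedAddCommGroup Z] [NormedSpace ℝ Z]
    {m r : ℕ} (ιY : Y →L[ℝ] Ytil) (Ψ : Fin r → U → ℝ) (e : Y × U → Z)
    (yδ : Fin m → Ytil) (α : Fin r → ℝ) (y : Y) (u : U) (lam : Z →L[ℝ] ℝ) : Prop :=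
  (∀ v : Y, ⟪ιY y - (m : ℝ)⁻¹ • ∑ j, yδ j, ιY v⟫ + lam (fderiv ℝ e (y, u) (v, 0)) = 0) ∧
  (∀ w : U, (∑ i, α i * fderiv ℝ (Ψ i) u w) + lam (fderiv ℝ e (y, u) (0, w)) = 0) ∧
  e (y, u) = 0

variable {Y U Util Ytil Z : Type*}
  [NormedAddCommGroup Y] [NormedSpace ℝ Y] [CompleteSpace Y]
  [NormedAddCommGroup U] [NormedSpace ℝ U] [CompleteSpace U]
  [NormedAddCommGroup Util] [InnerProductSpace ℝ Util] [CompleteSpace Util]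
  [NormedAddCommGroup Ytil] [InnerProductSpace ℝ Ytil] [CompleteSpace Ytil]
  [NormedAddCommGroup Z] [NormedSpace ℝ Z] [CompleteSpace Z]

/-!
By the open mapping theorem, the second-order condition makes the Hessian of the Lagrangian
coercive not only on the kernel of `De(y*,u*)` but in every direction close to it. Strict
differentiability carries this over to all nearby parameters, multipliers and points at once: a
feasible stationary point of the Lagrangian near `(y*,u*)` has a strictly smaller value than any
other feasible point near `(y*,u*)`. Stability and uniqueness place the global lower level
solutions for nearby parameters near `(y*,u*)` as well, so nearby KKT points are global solutions,
hence competitors in the learning problem.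
-/

section KernelCoercivity

variable {E F : Type*} [NormedAddCommGroup E] [NormedSpace ℝ E]
  [NormedAddCommGroup F] [NormedSpace ℝ F]

/-- The bilinear form `H` is coercive on the kernel of `A`. With `A` the derivative of the
constraint and `H` the Hessian of the Lagrangian this is the second-order sufficient condition. -/
def CoerciveOnKer (A : E →L[ℝ] F) (H : E →L[ℝ] E →L[ℝ] ℝ) : Prop :=
  ∃ η > 0, ∀ d, A d = 0 → η * ‖d‖ ^ 2 ≤ H d d

lemma quadratic_form_ge_of_perturbation (H : E →L[ℝ] E →L[ℝ] ℝ) {η s : ℝ} (hη : 0 ≤ η)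
    (hs : s ≤ 1) {d v : E} (hv : ‖v‖ ≤ s * ‖d‖) (hH : η * ‖d - v‖ ^ 2 ≤ H (d - v) (d - v)) :
    (η * (1 - s) ^ 2 - ‖H‖ * (2 * s + s ^ 2)) * ‖d‖ ^ 2 ≤ H d d := by
  have hexpand : H (d - v) (d - v) = H d d - H d v - H v d + H v v := by
    simp only [map_sub, sub_apply]
    ring
  have hdv : |H d v| ≤ ‖H‖ * ‖d‖ * (s * ‖d‖) := (H.le_opNorm₂ d v).trans (by gcongr)
  have hvd : |H v d| ≤ ‖H‖ * (s * ‖d‖) * ‖d‖ := (H.le_opNorm₂ v d).trans (by gcongr)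
  have hvv : |H v v| ≤ ‖H‖ * (s * ‖d‖) * (s * ‖d‖) :=
    (H.le_opNorm₂ v v).trans (mul_le_mul (by gcongr) hv (norm_nonneg v)
      (mul_nonneg (norm_nonneg H) ((norm_nonneg v).trans hv)))
  have hnorm : (1 - s) * ‖d‖ ≤ ‖d - v‖ := by linarith [norm_sub_norm_le d v]
  have hmain : η * ((1 - s) * ‖d‖) ^ 2 ≤ η * ‖d - v‖ ^ 2 := by
    have : 0 ≤ (1 - s) * ‖d‖ := mul_nonneg (sub_nonneg.2 hs) (norm_nonneg d)
    gcongr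
  linarith [neg_le_of_abs_le hdv, neg_le_of_abs_le hvd, le_of_abs_le hvv]

lemma CoerciveOnKer.exists_near_ker [CompleteSpace E] [CompleteSpace F] {A : E →L[ℝ] F}
    {H : E →L[ℝ] E →L[ℝ] ℝ} (h : CoerciveOnKer A H) (hA : Function.Surjective A) :
    ∃ ε > 0, ∃ c > 0, ∀ d, ‖A d‖ ≤ ε * ‖d‖ → c * ‖d‖ ^ 2 ≤ H d d := by
  obtain ⟨η, hη, hH⟩ := h
  obtain ⟨C, hC, hpreimage⟩ := A.exists_preimage_norm_le hA
  have hcoeff : ∀ᶠ ε in 𝓝 (0 : ℝ),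
      C * ε < 1 ∧ η / 2 < η * (1 - C * ε) ^ 2 - ‖H‖ * (2 * (C * ε) + (C * ε) ^ 2) :=
    (ContinuousAt.eventually_lt (by fun_prop) (by fun_prop) (by simp)).and
      (ContinuousAt.eventually_lt (by fun_prop) (by fun_prop) (by simpa using hη))
  obtain ⟨ε, ⟨hε1, hcoeff⟩, hε⟩ :=
    ((hcoeff.filter_mono nhdsWithin_le_nhds).and (self_mem_nhdsWithin (s := Set.Ioi 0))).exists
  refine ⟨ε, hε, η / 2, by positivity, fun d hd ↦ ?_⟩
  obtain ⟨v, hAv, hv⟩ := hpreimage (A d)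
  have hker : A (d - v) = 0 := by rw [map_sub, hAv, sub_self]
  have hv' : ‖v‖ ≤ C * ε * ‖d‖ :=
    hv.trans (by rw [mul_assoc]; gcongr)
  calc η / 2 * ‖d‖ ^ 2
      ≤ (η * (1 - C * ε) ^ 2 - ‖H‖ * (2 * (C * ε) + (C * ε) ^ 2)) * ‖d‖ ^ 2 := by gcongr
    _ ≤ H d d := quadratic_form_ge_of_perturbation H hη.le hε1.le hv' (hH _ hker)

end KernelCoercivity

section StrictMinimality

variable {Q E F : Type*} [NormedAddCommGroup Q] [NormedSpace ℝ Q]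
  [NormedAddCommGroup E] [NormedSpace ℝ E] [NormedAddCommGroup F] [NormedSpace ℝ F]

lemma exists_fderiv_lineMap_eq_sub {f : E → ℝ} {x y : E}
    (hf : ∀ z ∈ segment ℝ x y, DifferentiableAt ℝ f z) :
    ∃ t ∈ Set.Ioo (0 : ℝ) 1, fderiv ℝ f (AffineMap.lineMap x y t) (y - x) = f y - f x := by
  have hderiv : ∀ t ∈ Set.Icc (0 : ℝ) 1, HasDerivAt (fun t ↦ f (AffineMap.lineMap x y t))
      (fderiv ℝ f (AffineMap.lineMap x y t) (y - x)) t := fun t ht ↦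
    (hf _ (segment_eq_image_lineMap ℝ x y ▸ Set.mem_image_of_mem _ ht)).hasFDerivAt.comp_hasDerivAt
      t AffineMap.hasDerivAt_lineMap
  obtain ⟨t, ht, hslope⟩ := exists_hasDerivAt_eq_slope _ _ zero_lt_one
    (fun t ht ↦ (hderiv t ht).continuousAt.continuousWithinAt)
    (fun t ht ↦ hderiv t (Set.Ioo_subset_Icc_self ht))
  exact ⟨t, ht, by simpa using hslope⟩

lemma lt_of_forall_openSegment_fderiv_sub_pos {f : E → ℝ} {x y : E}
    (hf : ∀ z ∈ segment ℝ x y, DifferentiableAt ℝ f z)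
    (hpos : ∀ z ∈ openSegment ℝ x y, 0 < fderiv ℝ f z (z - x)) : f x < f y := by
  obtain ⟨t, ht, hslope⟩ := exists_fderiv_lineMap_eq_sub hf
  have hprod := hpos _ (openSegment_eq_image_lineMap ℝ x y ▸ Set.mem_image_of_mem _ ht)
  have hsub : AffineMap.lineMap x y t - x = t • (y - x) := by simp [AffineMap.lineMap_apply]
  rw [hsub, map_smul, smul_eq_mul, hslope] at hprod
  exact sub_pos.1 (pos_of_mul_pos_right hprod ht.1.le)

lemma eventually_norm_map_sub_le_of_hasStrictFDerivAt {e : E → F} {A : E →L[ℝ] F} {x₀ : E}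
    (he : HasStrictFDerivAt e A x₀) {ε : ℝ} (hε : 0 < ε) :
    ∀ᶠ p : E × E in 𝓝 (x₀, x₀), e p.1 = e p.2 → ‖A (p.2 - p.1)‖ ≤ ε * ‖p.2 - p.1‖ := by
  filter_upwards [he.isLittleO.def hε] with p hp heq
  simpa only [heq, sub_self, zero_sub, norm_neg, ← neg_sub p.2 p.1, map_neg] using hp

lemma eventually_le_increment_of_hasStrictFDerivAt {g : Q × E → E →L[ℝ] ℝ}
    {g' : Q × E →L[ℝ] E →L[ℝ] ℝ} {q₀ : Q} {x₀ : E} (hg : HasStrictFDerivAt g g' (q₀, x₀))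
    {c : ℝ} (hc : 0 < c) :
    ∀ᶠ t : Q × E × E in 𝓝 (q₀, x₀, x₀), c * ‖t.2.2 - t.2.1‖ ^ 2 ≤
        g' (0, t.2.2 - t.2.1) (t.2.2 - t.2.1) →
      c / 2 * ‖t.2.2 - t.2.1‖ ^ 2 ≤ (g (t.1, t.2.2) - g (t.1, t.2.1)) (t.2.2 - t.2.1) := by
  have hpair : Tendsto (fun t : Q × E × E ↦ ((t.1, t.2.2), (t.1, t.2.1))) (𝓝 (q₀, x₀, x₀))
      (𝓝 ((q₀, x₀), (q₀, x₀))) := Continuous.tendsto' (by fun_prop) _ _ rfl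
  filter_upwards [hpair.eventually (hg.isLittleO.def (half_pos hc))]
  rintro ⟨q, x, y⟩ hlin hcoercive
  simp only [Prod.mk_sub_mk, sub_self, Prod.norm_mk, norm_zero, norm_nonneg, sup_of_le_right]
    at hlin hcoercive ⊢
  have herror := (abs_le.1 (ContinuousLinearMap.le_of_opNorm_le _ hlin (y - x))).1
  rw [sub_apply] at herror
  linarith

lemma contDiffAt_partialFDeriv {L : Q → E → ℝ} {q₀ : Q} {x₀ : E}
    (hL : ContDiffAt ℝ 2 (Function.uncurry L) (q₀, x₀)) :
    ContDiffAt ℝ 1 (fun p : Q × E ↦ fderiv ℝ (L p.1) p.2) (q₀, x₀) :=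
  ContDiffAt.fderiv (f := fun p : Q × E ↦ L p.1) (g := Prod.snd) (n := 2)
    (hL.comp ((q₀, x₀), x₀) (f := fun p : (Q × E) × E ↦ (p.1.1, p.2)) (by fun_prop))
    contDiffAt_snd (by norm_num)

lemma fderiv_partialFDeriv_apply {L : Q → E → ℝ} {q₀ : Q} {x₀ : E}
    (hL : ContDiffAt ℝ 2 (Function.uncurry L) (q₀, x₀)) (d : E) :
    fderiv ℝ (fun p : Q × E ↦ fderiv ℝ (L p.1) p.2) (q₀, x₀) (0, d) =
      fderiv ℝ (fderiv ℝ (L q₀)) x₀ d := by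
  have hg := ((contDiffAt_partialFDeriv hL).differentiableAt one_ne_zero).hasFDerivAt
  have hcomp := (hg.comp x₀ (hasFDerivAt_prodMk_right q₀ x₀)).fderiv
  exact (DFunLike.congr_fun hcomp d).symm

lemma eventually_differentiableAt_partial {L : Q → E → ℝ} {q₀ : Q} {x₀ : E}
    (hL : ContDiffAt ℝ 2 (Function.uncurry L) (q₀, x₀)) :
    ∀ᶠ p : Q × E in 𝓝 (q₀, x₀), DifferentiableAt ℝ (L p.1) p.2 := by
  filter_upwards [hL.eventually (by simp)] with p hp
  exact (hp.differentiableAt two_ne_zero).comp p.2 (f := fun x ↦ (p.1, x)) (by fun_prop)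

theorem exists_ball_lt_of_fderiv_eq_zero [CompleteSpace E] [CompleteSpace F] {L : Q → E → ℝ}
    {e : E → F} {A : E →L[ℝ] F} {q₀ : Q} {x₀ : E}
    (hL : ContDiffAt ℝ 2 (Function.uncurry L) (q₀, x₀))
    (he : HasStrictFDerivAt e A x₀) (hsurj : Function.Surjective A)
    (hcoercive : CoerciveOnKer A (fderiv ℝ (fderiv ℝ (L q₀)) x₀)) :
    ∃ ρ > 0, ∀ q ∈ Metric.ball q₀ ρ, ∀ x ∈ Metric.ball x₀ ρ, ∀ y ∈ Metric.ball x₀ ρ,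
      e x = e y → fderiv ℝ (L q) x = 0 → x ≠ y → L q x < L q y := by
  obtain ⟨ε, hε, c, hc, hnear⟩ := hcoercive.exists_near_ker hsurj
  have hdir : ∀ᶠ t : Q × E × E in 𝓝 (q₀, x₀, x₀), e t.2.1 = e t.2.2 →
      ‖A (t.2.2 - t.2.1)‖ ≤ ε * ‖t.2.2 - t.2.1‖ :=
    (continuous_snd.tendsto (q₀, x₀, x₀)).eventually
      (eventually_norm_map_sub_le_of_hasStrictFDerivAt he hε)
  have hincrement := eventually_le_increment_of_hasStrictFDerivAt
    ((contDiffAt_partialFDeriv hL).hasStrictFDerivAt one_ne_zero) hc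
  have hdiff : ∀ᶠ t : Q × E × E in 𝓝 (q₀, x₀, x₀), DifferentiableAt ℝ (L t.1) t.2.2 :=
    (Continuous.tendsto' (f := fun t : Q × E × E ↦ (t.1, t.2.2)) (by fun_prop) _ _ rfl).eventually
      (eventually_differentiableAt_partial hL)
  obtain ⟨ρ, hρ, hball⟩ :=
    Metric.eventually_nhds_iff_ball.1 (hdir.and (hincrement.and hdiff))
  simp only [← ball_prod_same, fderiv_partialFDeriv_apply hL] at hball
  refine ⟨ρ, hρ, fun q hq x hx y hy hexy hstat hxy ↦ ?_⟩
  have hsegment : segment ℝ x y ⊆ Metric.ball x₀ ρ := (convex_ball x₀ ρ).segment_subset hx hy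
  refine lt_of_forall_openSegment_fderiv_sub_pos
    (fun z hz ↦ (hball (q, x, z) ⟨hq, hx, hsegment hz⟩).2.2) fun z hz ↦ ?_
  have hzball := hsegment (openSegment_subset_segment ℝ x y hz)
  obtain ⟨t, ht, rfl⟩ := openSegment_eq_image' ℝ x y ▸ hz
  have hnear_z : ‖A (x + t • (y - x) - x)‖ ≤ ε * ‖x + t • (y - x) - x‖ := by
    have hnear_y := (hball (q, x, y) ⟨hq, hx, hy⟩).1 hexy
    rw [add_sub_cancel_left, map_smul, norm_smul, norm_smul, mul_left_comm]
    gcongr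
  have hgrowth := (hball (q, x, _) ⟨hq, hx, hzball⟩).2.1 (hnear _ hnear_z)
  rw [hstat, sub_zero] at hgrowth
  have hne : x + t • (y - x) - x ≠ 0 := by
    simpa only [add_sub_cancel_left] using smul_ne_zero ht.1.ne' (sub_ne_zero.2 hxy.symm)
  exact hgrowth.trans_lt' (mul_pos (half_pos hc) (pow_pos (norm_pos_iff.2 hne) 2))

end StrictMinimality

section ParametricProblem

lemma eventually_subset_of_mapClusterPt {P X : Type*} [TopologicalSpace P]
    [FirstCountableTopology P] [TopologicalSpace X] {S : P → Set X} {K : Set P} {p₀ : P} {x₀ : X}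
    (hcluster : ∀ p : ℕ → P, (∀ n, p n ∈ K) → Tendsto p atTop (𝓝 p₀) →
      ∀ x : ℕ → X, (∀ n, x n ∈ S (p n)) → MapClusterPt x₀ atTop x)
    {N : Set X} (hN : N ∈ 𝓝 x₀) :
    ∀ᶠ p in 𝓝[K] p₀, S p ⊆ N := by
  by_contra hfreq
  obtain ⟨p, hp, hpn⟩ := exists_seq_forall_of_frequently
    ((not_eventually.1 hfreq).and_eventually self_mem_nhdsWithin)
  choose x hx hxN using fun n ↦ Set.not_subset.1 (hpn n).1
  have hx₀ := hcluster p (fun n ↦ (hpn n).2) (hp.mono_right nhdsWithin_le_nhds) x hx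
  obtain ⟨n, hn⟩ := (hx₀.frequently hN).exists
  exact hxN n hn

variable {P E F : Type*} [NormedAddCommGroup P] [NormedSpace ℝ P]
  [NormedAddCommGroup E] [NormedSpace ℝ E] [NormedAddCommGroup F] [NormedSpace ℝ F]

/-- `x` is a global minimizer of `f` subject to `e x = 0`; for `f = Jr ιY Ψ α yδ` these are the
solutions of the lower level problem `(P_{α,yδ})`. -/
def IsConstrainedMin {X W : Type*} [Zero W] (f : X → ℝ) (e : X → W) (x : X) : Prop :=
  e x = 0 ∧ ∀ y, e y = 0 → f x ≤ f y

/-- The Lagrangian of `min J p` subject to `e = 0`, for a parameter and a multiplier `(p, l)`. The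
multiplier is grouped with the parameter because both are held fixed in the minimization. -/
def lagrangian (J : P → E → ℝ) (e : E → F) (q : P × (F →L[ℝ] ℝ)) (x : E) : ℝ :=
  J q.1 x + q.2 (e x)

lemma contDiffAt_uncurry_lagrangian {J : P → E → ℝ} {e : E → F} {p₀ : P} {x₀ : E} {n : WithTop ℕ∞}
    (hJ : ContDiffAt ℝ n (Function.uncurry J) (p₀, x₀)) (he : ContDiffAt ℝ n e x₀)
    (l₀ : F →L[ℝ] ℝ) :
    ContDiffAt ℝ n (Function.uncurry (lagrangian J e)) ((p₀, l₀), x₀) := by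
  have hJ' := hJ.comp ((p₀, l₀), x₀)
    (f := fun t : (P × (F →L[ℝ] ℝ)) × E ↦ (t.1.1, t.2)) (by fun_prop)
  have he' := he.comp ((p₀, l₀), x₀) (f := fun t : (P × (F →L[ℝ] ℝ)) × E ↦ t.2) (by fun_prop)
  exact hJ'.add (ContDiffAt.clm_apply (by fun_prop) he')

theorem eventually_isConstrainedMin_of_fderiv_lagrangian_eq_zero [CompleteSpace E]
    [CompleteSpace F] {J : P → E → ℝ} {e : E → F} {K : Set P} {p₀ : P} {x₀ : E} {l₀ : F →L[ℝ] ℝ}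
    (hJ : ContDiffAt ℝ 2 (Function.uncurry J) (p₀, x₀)) (he : ContDiffAt ℝ 2 e x₀)
    (hsurj : Function.Surjective (fderiv ℝ e x₀))
    (hcoercive : CoerciveOnKer (fderiv ℝ e x₀)
      (fderiv ℝ (fderiv ℝ (lagrangian J e (p₀, l₀))) x₀))
    (hsolvable : ∀ p ∈ K, ∃ x, IsConstrainedMin (J p) e x)
    (hlocalized : ∀ N ∈ 𝓝 x₀, ∀ᶠ p in 𝓝[K] p₀, {x | IsConstrainedMin (J p) e x} ⊆ N) :
    ∀ᶠ t : P × E × (F →L[ℝ] ℝ) in 𝓝 (p₀, x₀, l₀), t.1 ∈ K → e t.2.1 = 0 →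
      fderiv ℝ (lagrangian J e (t.1, t.2.2)) t.2.1 = 0 → IsConstrainedMin (J t.1) e t.2.1 := by
  obtain ⟨ρ, hρ, hstrict⟩ := exists_ball_lt_of_fderiv_eq_zero
    (contDiffAt_uncurry_lagrangian hJ he l₀) (he.hasStrictFDerivAt two_ne_zero) hsurj hcoercive
  have hsolutions : ∀ᶠ t : P × E × (F →L[ℝ] ℝ) in 𝓝 (p₀, x₀, l₀),
      t.1 ∈ K → {x | IsConstrainedMin (J t.1) e x} ⊆ Metric.ball x₀ ρ :=
    (continuous_fst.tendsto (p₀, x₀, l₀)).eventually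
      (eventually_nhdsWithin_iff.1 (hlocalized _ (Metric.ball_mem_nhds x₀ hρ)))
  filter_upwards [hsolutions, Metric.ball_mem_nhds _ hρ]
  rintro ⟨p, x, l⟩ hsol hball hp hex hstat
  simp only [← ball_prod_same, Set.mem_prod] at hball
  obtain ⟨hp_ball, hx_ball, hl_ball⟩ := hball
  obtain ⟨y, hy⟩ := hsolvable p hp
  suffices x = y from this ▸ hy
  by_contra hxy
  have hlt := hstrict (p, l) (by simpa only [← ball_prod_same] using ⟨hp_ball, hl_ball⟩) x hx_ball y
    (hsol hp hy) (hex.trans hy.1.symm) hstat hxy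
  simp only [lagrangian, hex, hy.1, map_zero, add_zero] at hlt
  exact hlt.not_ge (hy.2 x hex)

end ParametricProblem

section TikhonovProblem

omit [CompleteSpace Y] [CompleteSpace U] [CompleteSpace Ytil] [CompleteSpace Z]

lemma contDiffAt_uncurry_Jr {m r : ℕ} (ιY : Y →L[ℝ] Ytil) {Ψ : Fin r → U → ℝ} (α : Fin r → ℝ)
    (yδ : Fin m → Ytil) {p : Y × U} {n : WithTop ℕ∞} (hΨ : ∀ i, ContDiffAt ℝ n (Ψ i) p.2) :
    ContDiffAt ℝ n (Function.uncurry fun α ↦ Jr ιY Ψ α yδ) (α, p) := by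
  refine ContDiffAt.add (contDiffAt_const.mul (ContDiffAt.sum fun j _ ↦ ?_))
    (ContDiffAt.sum fun i _ ↦ ?_)
  · exact ContDiffAt.norm_sq ℝ (by fun_prop)
  · exact ContDiffAt.mul (by fun_prop)
      ((hΨ i).comp (α, p) (f := fun t : (Fin r → ℝ) × Y × U ↦ t.2.2) (by fun_prop))

lemma hasFDerivAt_half_mean_norm_sub_sq {m : ℕ} (hm : 0 < m) (b : Fin m → Ytil) (z : Ytil) :
    HasFDerivAt (fun z ↦ 1 / (2 * (m : ℝ)) * ∑ j, ‖z - b j‖ ^ 2)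
      (innerSL ℝ (z - (m : ℝ)⁻¹ • ∑ j, b j)) z := by
  have hsum := (HasFDerivAt.fun_sum fun j (_ : j ∈ Finset.univ) ↦
    ((hasFDerivAt_id z).sub_const (b j)).norm_sq).const_mul (1 / (2 * (m : ℝ)))
  refine hsum.congr_fderiv (ContinuousLinearMap.ext fun w ↦ ?_)
  have hm' : (m : ℝ) ≠ 0 := by positivity
  have hmean : 1 / (2 * (m : ℝ)) * ∑ j, 2 * ⟪z - b j, w⟫ =
      ⟪z - (m : ℝ)⁻¹ • ∑ j, b j, w⟫ := by
    simp only [inner_sub_left, real_inner_smul_left, sum_inner, ← Finset.mul_sum,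
      Finset.sum_sub_distrib, Finset.sum_const, Finset.card_univ, Fintype.card_fin, nsmul_eq_mul]
    field_simp
  simpa [inner_sub_left, real_inner_smul_left, sum_inner] using hmean

lemma hasFDerivAt_Jr {m r : ℕ} (hm : 0 < m) (ιY : Y →L[ℝ] Ytil) {Ψ : Fin r → U → ℝ}
    (α : Fin r → ℝ) (yδ : Fin m → Ytil) {p : Y × U} (hΨ : ∀ i, DifferentiableAt ℝ (Ψ i) p.2) :
    HasFDerivAt (Jr ιY Ψ α yδ)
      ((innerSL ℝ (ιY p.1 - (m : ℝ)⁻¹ • ∑ j, yδ j)).comp (ιY.comp (.fst ℝ Y U)) +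
        ∑ i, α i • (fderiv ℝ (Ψ i) p.2).comp (.snd ℝ Y U)) p := by
  have htracking := (hasFDerivAt_half_mean_norm_sub_sq hm yδ (ιY p.1)).comp p
    (ιY.comp (.fst ℝ Y U)).hasFDerivAt
  have hpenalty := HasFDerivAt.fun_sum fun i (_ : i ∈ Finset.univ) ↦
    ((hΨ i).hasFDerivAt.comp p hasFDerivAt_snd).const_mul (α i)
  exact htracking.add hpenalty

lemma IsKKTPoint.fderiv_lagrangian_eq_zero {m r : ℕ} (hm : 0 < m) {ιY : Y →L[ℝ] Ytil}
    {Ψ : Fin r → U → ℝ} {e : Y × U → Z} {yδ : Fin m → Ytil} {α : Fin r → ℝ} {y : Y} {u : U}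
    {l : Z →L[ℝ] ℝ} (hΨ : ∀ i, DifferentiableAt ℝ (Ψ i) u) (he : DifferentiableAt ℝ e (y, u))
    (h : IsKKTPoint ιY Ψ e yδ α y u l) :
    fderiv ℝ (lagrangian (fun α ↦ Jr ιY Ψ α yδ) e (α, l)) (y, u) = 0 := by
  have hderiv := (hasFDerivAt_Jr hm ιY α yδ (p := (y, u)) hΨ).add
    (l.hasFDerivAt.comp (y, u) he.hasFDerivAt)
  refine hderiv.fderiv.trans (ContinuousLinearMap.prod_ext ?_ ?_) <;> ext d
  · simpa [inner_sub_left, real_inner_smul_left, sum_inner] using h.1 d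
  · simpa using h.2.1 d

lemma eventually_fderiv_lagrangian_eq_zero_of_isKKTPoint {m r : ℕ} (hm : 0 < m)
    (ιY : Y →L[ℝ] Ytil) {Ψ : Fin r → U → ℝ} {e : Y × U → Z} (yδ : Fin m → Ytil) {p₀ : Y × U}
    (hΨ : ∀ i, ContDiffAt ℝ 1 (Ψ i) p₀.2) (he : ContDiffAt ℝ 1 e p₀) :
    ∀ᶠ p in 𝓝 p₀, ∀ α l, IsKKTPoint ιY Ψ e yδ α p.1 p.2 l →
      fderiv ℝ (lagrangian (fun α ↦ Jr ιY Ψ α yδ) e (α, l)) p = 0 := by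
  have hΨ_near : ∀ᶠ p in 𝓝 p₀, ∀ i, ContDiffAt ℝ 1 (Ψ i) p.2 := eventually_all.2 fun i ↦
    (continuous_snd.tendsto p₀).eventually ((hΨ i).eventually (by simp))
  filter_upwards [hΨ_near, he.eventually (by simp)] with p hΨ he α l hkkt
  exact hkkt.fderiv_lagrangian_eq_zero hm (fun i ↦ (hΨ i).differentiableAt one_ne_zero)
    (he.differentiableAt one_ne_zero)

lemma IsKKTPoint.multiplier_unique {m r : ℕ} {ιY : Y →L[ℝ] Ytil} {Ψ : Fin r → U → ℝ}
    {e : Y × U → Z} {yδ : Fin m → Ytil} {α : Fin r → ℝ} {y : Y} {u : U} {l l' : Z →L[ℝ] ℝ}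
    (hsurj : Function.Surjective (fderiv ℝ e (y, u)))
    (h : IsKKTPoint ιY Ψ e yδ α y u l) (h' : IsKKTPoint ιY Ψ e yδ α y u l') : l = l' := by
  ext z
  obtain ⟨⟨v, w⟩, rfl⟩ := hsurj z
  have hsplit : ((v, w) : Y × U) = (v, 0) + (0, w) := by simp
  rw [hsplit, map_add, map_add, map_add]
  linarith [h.1 v, h'.1 v, h.2.1 w, h'.2.1 w]

end TikhonovProblem

omit [CompleteSpace Ytil] in
theorem learning_solution_is_local_KKT_solution_general {m r : ℕ} (hm : 0 < m)
    (ιY : Y →L[ℝ] Ytil) (e : Y × U → Z) (Ψ : Fin r → U → ℝ) (yδ : Fin m → Ytil)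
    (K : Set (Fin r → ℝ)) (αstar : Fin r → ℝ) (ystar : Y) (ustar : U) (f : Y × U → ℝ)
    (he : ContDiffAt ℝ 2 e (ystar, ustar)) (hΨ : ∀ i, ContDiffAt ℝ 2 (Ψ i) ustar)
    (hsurj : Function.Surjective (fderiv ℝ e (ystar, ustar)))
    (hsolvable : ∀ α ∈ K, ∃ p, IsConstrainedMin (Jr ιY Ψ α yδ) e p)
    (hLPopt : ∀ α ∈ K, ∀ p, IsConstrainedMin (Jr ιY Ψ α yδ) e p → f (ystar, ustar) ≤ f p)
    (hstable : ∀ α : ℕ → Fin r → ℝ, (∀ n, α n ∈ K) → Tendsto α atTop (𝓝 αstar) →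
      ∀ p : ℕ → Y × U, (∀ n, IsConstrainedMin (Jr ιY Ψ (α n) yδ) e (p n)) →
        (∃ q, MapClusterPt q atTop p) ∧
        ∀ q, MapClusterPt q atTop p → IsConstrainedMin (Jr ιY Ψ αstar yδ) e q)
    (hsosc : ∃ l : Z →L[ℝ] ℝ, IsKKTPoint ιY Ψ e yδ αstar ystar ustar l ∧
      CoerciveOnKer (fderiv ℝ e (ystar, ustar))
        (fderiv ℝ (fderiv ℝ (lagrangian (fun α ↦ Jr ιY Ψ α yδ) e (αstar, l))) (ystar, ustar)))
    (huniq : ∀ q, IsConstrainedMin (Jr ιY Ψ αstar yδ) e q → q = (ystar, ustar)) :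
    ∃! l : Z →L[ℝ] ℝ, IsKKTPoint ιY Ψ e yδ αstar ystar ustar l ∧
      ∀ᶠ t : (Fin r → ℝ) × Y × U × (Z →L[ℝ] ℝ) in 𝓝 (αstar, ystar, ustar, l),
        t.1 ∈ K → IsKKTPoint ιY Ψ e yδ t.1 t.2.1 t.2.2.1 t.2.2.2 →
          f (ystar, ustar) ≤ f (t.2.1, t.2.2.1) := by
  obtain ⟨l, hkkt, hcoercive⟩ := hsosc
  refine ⟨l, ⟨hkkt, ?_⟩, fun l' h' ↦ h'.1.multiplier_unique hsurj hkkt⟩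
  have hlocalized := fun N ↦ eventually_subset_of_mapClusterPt
    (S := fun α ↦ {p | IsConstrainedMin (Jr ιY Ψ α yδ) e p}) (N := N) fun α hα hlim p hp ↦ by
      obtain ⟨⟨q, hq⟩, hsol⟩ := hstable α hα hlim p hp
      exact huniq q (hsol q hq) ▸ hq
  have hglobal := eventually_isConstrainedMin_of_fderiv_lagrangian_eq_zero
    (contDiffAt_uncurry_Jr ιY αstar yδ hΨ) he hsurj hcoercive hsolvable hlocalized
  have hreassoc : Tendsto
      (fun t : (Fin r → ℝ) × Y × U × (Z →L[ℝ] ℝ) ↦ (t.1, (t.2.1, t.2.2.1), t.2.2.2))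
      (𝓝 (αstar, ystar, ustar, l)) (𝓝 (αstar, (ystar, ustar), l)) :=
    Continuous.tendsto' (by fun_prop) _ _ rfl
  have hstat := (continuous_snd.fst.tendsto (αstar, (ystar, ustar), l)).eventually
    (eventually_fderiv_lagrangian_eq_zero_of_isKKTPoint hm ιY yδ (p₀ := (ystar, ustar))
      (fun i ↦ (hΨ i).of_le one_le_two) (he.of_le one_le_two))
  filter_upwards [hreassoc.eventually (hglobal.and hstat)] with t ⟨hglobal, hstat⟩ hα hK
  exact hLPopt t.1 hα _ (hglobal hα hK.2.2 (hstat _ _ hK))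

/-- **Theorem 5.1** (solutions of the learning problem are local solutions of the KKT
reformulation): under (B1)–(B4) and solvability of the lower level problems, if
`(α*,y*,u*)` solves the learning problem `(LP)`, `(P_{α*,yδ})` is stable with respect
to the regularization parameters, `(y*,u*)` satisfies the second order sufficient
optimality conditions of `(P_{α*,yδ})` and is the unique solution of `(P_{α*,yδ})`,
then there is a unique `λ* ∈ Z'` making `(α*,y*,u*,λ*)` a local solution of `(LP̄)`. -/
theorem learning_solution_is_local_KKT_solution
    (hYrefl : Function.Surjective (NormedSpace.inclusionInDoubleDual ℝ Y))
    (hUrefl : Function.Surjective (NormedSpace.inclusionInDoubleDual ℝ U))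
    {m r : ℕ} (hm : 0 < m) (hr : 0 < r)
    (ιY : Y →L[ℝ] Ytil) (hιY : Function.Injective ιY)
    (ιU : U →L[ℝ] Util) (hιU : Function.Injective ιU)
    (e : Y × U → Z) (Ψ : Fin r → U → ℝ)
    (hB1 : ContDiff ℝ 2 e) (hB3 : ∀ i, ContDiff ℝ 2 (Ψ i))
    (hB4 : ∀ p : Y × U, Function.Bijective (fun v : Y => fderiv ℝ e p (v, 0)))
    (udag : Util) (yδ : Fin m → Ytil)
    (αlo αhi : Fin r → ℝ) (hαpos : ∀ i, 0 < αlo i) (hαle : ∀ i, αlo i ≤ αhi i)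
    -- the lower level problem admits a solution for every admissible α:
    (hsolvable : ∀ α : Fin r → ℝ, (∀ i, αlo i ≤ α i ∧ α i ≤ αhi i) →
      ∃ p : Y × U, e p = 0 ∧ ∀ q : Y × U, e q = 0 → Jr ιY Ψ α yδ p ≤ Jr ιY Ψ α yδ q)
    (αstar : Fin r → ℝ) (ystar : Y) (ustar : U)
    -- `(α*,y*,u*)` is a solution of the learning problem (LP):
    (hαstar : ∀ i, αlo i ≤ αstar i ∧ αstar i ≤ αhi i)
    (hsol : e (ystar, ustar) = 0 ∧
      ∀ q : Y × U, e q = 0 → Jr ιY Ψ αstar yδ (ystar, ustar) ≤ Jr ιY Ψ αstar yδ q)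
    (hLPopt : ∀ α : Fin r → ℝ, (∀ i, αlo i ≤ α i ∧ α i ≤ αhi i) →
      ∀ q : Y × U, (e q = 0 ∧ ∀ q' : Y × U, e q' = 0 → Jr ιY Ψ α yδ q ≤ Jr ιY Ψ α yδ q') →
        ‖ιU ustar - udag‖ ^ 2 ≤ ‖ιU q.2 - udag‖ ^ 2)
    -- (i) stability of `(P_{α*,yδ})` with respect to the regularization parameters:
    (hstable : ∀ αseq : ℕ → Fin r → ℝ,
      (∀ n i, αlo i ≤ αseq n i ∧ αseq n i ≤ αhi i) →
      (∀ i, Tendsto (fun n => αseq n i) atTop (𝓝 (αstar i))) →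
      ∀ (y : ℕ → Y) (u : ℕ → U),
        (∀ n, e (y n, u n) = 0 ∧
          ∀ q : Y × U, e q = 0 → Jr ιY Ψ (αseq n) yδ (y n, u n) ≤ Jr ιY Ψ (αseq n) yδ q) →
        (∃ p : Y × U, MapClusterPt p atTop (fun n => (y n, u n))) ∧
        ∀ p : Y × U, MapClusterPt p atTop (fun n => (y n, u n)) →
          (e p = 0 ∧ ∀ q : Y × U, e q = 0 → Jr ιY Ψ αstar yδ p ≤ Jr ιY Ψ αstar yδ q))
    -- (ii) second order sufficient optimality conditions at `(y*,u*)`: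
    (hsosc : ∃ lam : Z →L[ℝ] ℝ, IsKKTPoint ιY Ψ e yδ αstar ystar ustar lam ∧
      ∃ η > 0, ∀ δ : Y × U, fderiv ℝ e (ystar, ustar) δ = 0 →
        η * ‖δ‖ ^ 2 ≤
          fderiv ℝ (fderiv ℝ (fun p : Y × U => Jr ιY Ψ αstar yδ p + lam (e p)))
            (ystar, ustar) δ δ)
    -- (iii) uniqueness of the solution of `(P_{α*,yδ})`:
    (huniq : ∀ q : Y × U,
      (e q = 0 ∧ ∀ q' : Y × U, e q' = 0 → Jr ιY Ψ αstar yδ q ≤ Jr ιY Ψ αstar yδ q') →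
      q = (ystar, ustar)) :
    ∃! lamstar : Z →L[ℝ] ℝ,
      IsKKTPoint ιY Ψ e yδ αstar ystar ustar lamstar ∧
      ∃ V ∈ 𝓝 ((αstar, ystar, ustar, lamstar) : (Fin r → ℝ) × Y × U × (Z →L[ℝ] ℝ)),
        ∀ t ∈ V, (∀ i, αlo i ≤ t.1 i ∧ t.1 i ≤ αhi i) →
          IsKKTPoint ιY Ψ e yδ t.1 t.2.1 t.2.2.1 t.2.2.2 →
          ‖ιU ustar - udag‖ ^ 2 ≤ ‖ιU t.2.2.1 - udag‖ ^ 2 := by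
  simpa only [← eventually_iff_exists_mem, Set.mem_ofPred_eq] using
    learning_solution_is_local_KKT_solution_general hm ιY e Ψ yδ
      {α | ∀ i, αlo i ≤ α i ∧ α i ≤ αhi i} αstar ystar ustar (fun p ↦ ‖ιU p.2 - udag‖ ^ 2)
      hB1.contDiffAt (fun i ↦ (hB3 i).contDiffAt)
      (fun z ↦ let ⟨v, hv⟩ := (hB4 (ystar, ustar)).2 z; ⟨(v, 0), hv⟩) hsolvable hLPopt
      (fun α hα hlim p ↦ hstable α hα (tendsto_pi_nhds.1 hlim) (Prod.fst ∘ p) (Prod.snd ∘ p))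
      hsosc huniq
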